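/- (Annealed variant.) There exists a constant c₀ > 0 (depending on the energy E and on |U|) such that for every c ≥ c₀ the following holds: define the cooling schedule T_n = c/log(n+1) for n ≥ 1, let P⁽ⁿ⁾ be the random-scan Gibbs sampler kernel P = (1/|U|)·Σ_{u∈U} P_u at temperature T_n, and for an arbitrary initial probability vector μ on S let μ_n = μ·P⁽¹⁾·P⁽²⁾⋯P⁽ⁿ⁾. Then lim_{n→∞} Σ_{s : E(s) = min_{s'∈S} E(s')} μ_n(s) = 1; i.e., the annealed algorithm drives the network to a state of minimal energy starting from any state. -/

import Mathlib

/-! The proof controls a constant `a ∈ [0, 1]` with `a • π_n ≤ μ_n` pointwise, where `π_n` is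
the Gibbs law at inverse temperature `β_n = log (n + 1) / c`. Once `a → 1`, the claim follows, since
`π_n` itself concentrates on the minimizers as `β_n → ∞`.

Let `N = |U|` and let `K` bound the energies. Split `μ_n = a π_n + ρ` with `ρ ≥ 0` of mass `1 - a`
and run `N` steps.
* The part `a π_n` stays above `a exp (-2K (β_{n+N} - β_n)) π_{n+N}`: the kernel of each step
  preserves its own Gibbs law (`gibbs_invariant`), and changing `β` by `δ` changes the Gibbs weights
  by a factor of at least `exp (-2Kδ)` (`gibbs_change`).
* The part `ρ` spreads everywhere: by updating each site once, every configuration is reached from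
  every other one, with probability at least `const * exp (-2KN β_{n+N})` (`spread`), which is at
  least `const / √(n+N+1)` as soon as `c ≥ 4KN` (`minorization`).

Along `n = kN` the defect `x_k = 1 - a` therefore satisfies
`x_{k+1} ≤ (1 - κ/√(k+1)) x_k + C/(k+1)`. As `∑ 1/√(k+1) = ∞` and `1/(k+1)` is negligible compared
with `1/√(k+1)`, this forces `x_k → 0` (`defect_tendsto_zero`). -/

open Finset Real

/-- The local energy of user `u` in configuration `s`:
`E_u(s) = φ_u(s_u) + Σ_{v ≠ u} φ_{uv}(s_u, s_v)`. -/
noncomputable def localEnergy {U : Type*} [Fintype U] [DecidableEq U] {S : U → Type*}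
    (φ1 : ∀ u, S u → ℝ) (φ2 : ∀ u v, S u → S v → ℝ) (u : U) (s : ∀ v, S v) : ℝ :=
  φ1 u (s u) + ∑ v ∈ Finset.univ.erase u, φ2 u v (s u) (s v)

/-- The global energy:
`E(s) = Σ_u φ_u(s_u) + Σ_{unordered pairs {u,v}, u ≠ v} φ_{uv}(s_u, s_v)`,
where (thanks to the symmetry of `φ2`) the sum over unordered pairs is
half the sum over ordered pairs of distinct indices. -/
noncomputable def globalEnergy {U : Type*} [Fintype U] [DecidableEq U] {S : U → Type*}
    (φ1 : ∀ u, S u → ℝ) (φ2 : ∀ u v, S u → S v → ℝ) (s : ∀ v, S v) : ℝ :=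
  ∑ u, φ1 u (s u) + (1 / 2) * ∑ u, ∑ v ∈ Finset.univ.erase u, φ2 u v (s u) (s v)


/-- The Gibbs distribution at temperature `T`:
`π_T(s) = exp(−E(s)/T) / Z_T` with `Z_T = Σ_s exp(−E(s)/T)`. -/
noncomputable def gibbsDist {U : Type*} [Fintype U] [DecidableEq U] {S : U → Type*}
    [∀ u, Fintype (S u)]
    (φ1 : ∀ u, S u → ℝ) (φ2 : ∀ u v, S u → S v → ℝ) (T : ℝ) (s : ∀ v, S v) : ℝ :=
  Real.exp (-(globalEnergy φ1 φ2 s) / T) /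
    ∑ s' : ∀ v, S v, Real.exp (-(globalEnergy φ1 φ2 s') / T)

/-- The heat-bath update kernel at site `u` and temperature `T`:
`P_u(s,s') = exp(−E_u(s')/T) / Σ_{a∈S_u} exp(−E_u(s[u:=a])/T)` if `s'` agrees with `s` off `u`
(i.e. `s' = s[u:=a]` for some `a ∈ S_u`), and `P_u(s,s') = 0` otherwise. -/
noncomputable def heatBath {U : Type*} [Fintype U] [DecidableEq U] {S : U → Type*}
    [∀ u, Fintype (S u)] [∀ u, DecidableEq (S u)]
    (φ1 : ∀ u, S u → ℝ) (φ2 : ∀ u v, S u → S v → ℝ) (T : ℝ) (u : U)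
    (s s' : ∀ v, S v) : ℝ :=
  if ∀ v, v ≠ u → s' v = s v then
    Real.exp (-(localEnergy φ1 φ2 u s') / T) /
      ∑ a : S u, Real.exp (-(localEnergy φ1 φ2 u (Function.update s u a)) / T)
  else 0

/-- The random-scan Gibbs sampler kernel `P = (1/|U|)·Σ_{u∈U} P_u`. -/
noncomputable def randomScan {U : Type*} [Fintype U] [DecidableEq U] {S : U → Type*}
    [∀ u, Fintype (S u)] [∀ u, DecidableEq (S u)]
    (φ1 : ∀ u, S u → ℝ) (φ2 : ∀ u v, S u → S v → ℝ) (T : ℝ)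
    (s s' : ∀ v, S v) : ℝ :=
  (1 / (Fintype.card U : ℝ)) * ∑ u, heatBath φ1 φ2 T u s s'

/-! ### A real recursion -/

theorem defect_tendsto_zero (x : ℕ → ℝ) (κ C : ℝ) (hκ : 0 < κ) (hκ1 : κ ≤ 1)
    (hrec : ∀ k : ℕ, x (k + 1) ≤ (1 - κ / √((k : ℝ) + 1)) * x k + C / ((k : ℝ) + 1))
    (hx : ∀ k, 0 ≤ x k) : Filter.Tendsto x Filter.atTop (nhds 0) := by
  set g : ℕ → ℝ := fun k => κ / √((k : ℝ) + 1) with hg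
  set G : ℕ → ℝ := fun k => ∑ i ∈ Finset.range k, g i with hG
  have hs1 : ∀ k : ℕ, 1 ≤ √((k : ℝ) + 1) := fun k => by
    rw [Real.one_le_sqrt]; linarith [(Nat.cast_nonneg k : (0 : ℝ) ≤ k)]
  have hss : ∀ k : ℕ, √((k : ℝ) + 1) * √((k : ℝ) + 1) = k + 1 := fun k =>
    Real.mul_self_sqrt (by positivity)
  have hg1 : ∀ k, g k ≤ 1 := fun k => by
    rw [hg]; simp only
    rw [div_le_one (by linarith [hs1 k])]; linarith [hs1 k]
  have hGtop : Filter.Tendsto G Filter.atTop Filter.atTop := by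
    have h := (Real.tendsto_sum_range_one_div_nat_succ_atTop).const_mul_atTop hκ
    refine Filter.tendsto_atTop_mono (fun k => ?_) h
    rw [Finset.mul_sum]
    refine Finset.sum_le_sum fun i _ => ?_
    simp only [hg]
    rw [mul_one_div]
    refine div_le_div_of_nonneg_left hκ.le (by linarith [hs1 i]) ?_
    nlinarith [hs1 i, hss i]
  rw [Metric.tendsto_atTop]
  intro ε hε
  have hε2 : 0 < ε / 2 := by positivity
  have hsq : Filter.Tendsto (fun k : ℕ => √((k : ℝ) + 1)) Filter.atTop Filter.atTop :=
    Real.tendsto_sqrt_atTop.comp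
      (Filter.tendsto_atTop_add_const_right _ _ tendsto_natCast_atTop_atTop)
  obtain ⟨k0, hk0⟩ := Filter.eventually_atTop.1
    (hsq.eventually_ge_atTop (C / (ε / 2 * κ)))
  have hd : ∀ k, k0 ≤ k → C / ((k : ℝ) + 1) ≤ ε / 2 * g k := by
    intro k hk
    have h1 := hk0 k hk
    have h2 := hs1 k
    rw [div_le_iff₀ (by positivity)] at h1
    simp only [hg]
    rw [mul_div_assoc', div_le_div_iff₀ (by positivity) (by linarith)]
    have h3 := mul_le_mul_of_nonneg_right h1 (by linarith : 0 ≤ √((k : ℝ) + 1))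
    have h4 : √((k : ℝ) + 1) * (ε / 2 * κ) * √((k : ℝ) + 1) = ε / 2 * κ * ((k : ℝ) + 1) := by
      linear_combination ε / 2 * κ * hss k
    linarith
  -- beyond `k0` the excess over `ε / 2` is multiplied by at most `1 - g k ≤ exp (-g k)`
  have hbound : ∀ k, k0 ≤ k →
      x k - ε / 2 ≤ x k0 * Real.exp (G k0) * Real.exp (-G k) := by
    intro k hk
    induction k, hk using Nat.le_induction with
    | base =>
      rw [mul_assoc, ← Real.exp_add, add_neg_cancel, Real.exp_zero]; linarith
    | succ k hk ih =>
      have h1 : x (k + 1) - ε / 2 ≤ (1 - g k) * (x k - ε / 2) := by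
        have := hrec k; have := hd k hk
        simp only [hg] at this ⊢; linarith
      have h2 : G (k + 1) = G k + g k := Finset.sum_range_succ _ _
      have h3 : 1 - g k ≤ Real.exp (-g k) := by linarith [Real.add_one_le_exp (-g k)]
      rw [h2, neg_add, Real.exp_add, ← mul_assoc]
      have hnn : 0 ≤ x k0 * Real.exp (G k0) * Real.exp (-G k) := by
        have := hx k0; positivity
      calc _ ≤ _ := h1
        _ ≤ (1 - g k) * (x k0 * Real.exp (G k0) * Real.exp (-G k)) :=
          mul_le_mul_of_nonneg_left ih (by linarith [hg1 k])
        _ ≤ _ := by rw [mul_comm]; exact mul_le_mul_of_nonneg_left h3 hnn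
  have hlim : Filter.Tendsto (fun k => x k0 * Real.exp (G k0) * Real.exp (-G k))
      Filter.atTop (nhds 0) := by
    simpa using (Real.tendsto_exp_neg_atTop_nhds_zero.comp hGtop).const_mul
      (x k0 * Real.exp (G k0))
  obtain ⟨k1, hk1⟩ := Filter.eventually_atTop.1 (hlim.eventually_lt_const hε2)
  refine ⟨max k0 k1, fun k hk => ?_⟩
  rw [Real.dist_eq, sub_zero, abs_of_nonneg (hx k)]
  have := hbound k (le_of_max_le_left hk)
  have := hk1 k (le_of_max_le_right hk)
  linarith

/-! ### Gibbs laws on a finite set -/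

section Abstract

variable {X : Type*} [Fintype X]

/-- The Gibbs law of an energy `E` on a finite set at inverse temperature `β`. -/
noncomputable def gibbsAt (E : X → ℝ) (β : ℝ) (s : X) : ℝ :=
  Real.exp (-β * E s) / ∑ s', Real.exp (-β * E s')

/-- The inverse temperature `1 / T_n = log (n + 1) / c`; it vanishes for `n = 0`. -/
noncomputable def invTemp (c : ℝ) (n : ℕ) : ℝ := Real.log ((n : ℝ) + 1) / c

theorem partition_pos [Nonempty X] (E : X → ℝ) (β : ℝ) : 0 < ∑ s', Real.exp (-β * E s') :=
  Finset.sum_pos (fun _ _ => Real.exp_pos _) Finset.univ_nonempty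

theorem gibbsAt_pos [Nonempty X] (E : X → ℝ) (β : ℝ) (s : X) : 0 < gibbsAt E β s :=
  div_pos (Real.exp_pos _) (partition_pos E β)

theorem gibbsAt_sum [Nonempty X] (E : X → ℝ) (β : ℝ) : ∑ s, gibbsAt E β s = 1 := by
  unfold gibbsAt
  rw [← Finset.sum_div, div_self (partition_pos E β).ne']

theorem gibbsAt_le_one [Nonempty X] (E : X → ℝ) (β : ℝ) (s : X) : gibbsAt E β s ≤ 1 := by
  rw [← gibbsAt_sum E β]
  exact Finset.single_le_sum (fun i _ => (gibbsAt_pos E β i).le) (Finset.mem_univ s)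

/-- Numerator and partition function each change by a factor of at most `exp (K (β' - β))`. -/
theorem gibbs_change [Nonempty X] (E : X → ℝ) (K : ℝ) (hK : ∀ s, |E s| ≤ K) {β β' : ℝ}
    (h : β ≤ β') (s : X) :
    Real.exp (-(2 * K * (β' - β))) * gibbsAt E β' s ≤ gibbsAt E β s := by
  have hnum : Real.exp (-(K * (β' - β))) * Real.exp (-β' * E s) ≤ Real.exp (-β * E s) := by
    rw [← Real.exp_add, Real.exp_le_exp]
    nlinarith [(abs_le.1 (hK s)).1]
  have hden : Real.exp (-(K * (β' - β))) * ∑ s', Real.exp (-β * E s')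
      ≤ ∑ s', Real.exp (-β' * E s') := by
    rw [Finset.mul_sum]
    refine Finset.sum_le_sum fun t _ => ?_
    rw [← Real.exp_add, Real.exp_le_exp]
    nlinarith [(abs_le.1 (hK t)).2]
  have hsplit : Real.exp (-(2 * K * (β' - β)))
      = Real.exp (-(K * (β' - β))) * Real.exp (-(K * (β' - β))) := by
    rw [← Real.exp_add]; congr 1; ring
  have hz := partition_pos E β
  have hz' := partition_pos E β'
  unfold gibbsAt
  rw [hsplit, mul_div_assoc', div_le_div_iff₀ hz' hz]
  calc _ = (Real.exp (-(K * (β' - β))) * Real.exp (-β' * E s))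
        * (Real.exp (-(K * (β' - β))) * ∑ s', Real.exp (-β * E s')) := by ring
    _ ≤ _ := mul_le_mul hnum hden (by positivity) (by positivity)

theorem invTemp_mono {c : ℝ} (hc : 0 < c) : Monotone (invTemp c) := by
  intro m n h
  unfold invTemp
  have : (m : ℝ) ≤ n := by exact_mod_cast h
  gcongr

theorem invTemp_tendsto {c : ℝ} (hc : 0 < c) :
    Filter.Tendsto (invTemp c) Filter.atTop Filter.atTop :=
  (Real.tendsto_log_atTop.comp (Filter.tendsto_atTop_add_const_right _ _
    tendsto_natCast_atTop_atTop)).atTop_div_const hc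

theorem invTemp_sub_le {c : ℝ} (hc : 0 < c) (n N : ℕ) :
    invTemp c (n + N) - invTemp c n ≤ N / c / ((n : ℝ) + 1) := by
  unfold invTemp
  have h1 : (0 : ℝ) < (n : ℝ) + 1 := by positivity
  have h2 : (0 : ℝ) < ((n + N : ℕ) : ℝ) + 1 := by positivity
  rw [← sub_div, div_right_comm, ← Real.log_div h2.ne' h1.ne']
  refine div_le_div_of_nonneg_right ?_ hc.le
  refine (Real.log_le_sub_one_of_pos (by positivity)).trans (le_of_eq ?_)
  push_cast; field_simp; ring

theorem gibbs_concentrates [Nonempty X] (E : X → ℝ) {β : ℕ → ℝ}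
    (hβ : Filter.Tendsto β Filter.atTop Filter.atTop) :
    Filter.Tendsto (fun n => ∑ s ∈ Finset.univ.filter
      (fun s => E s = Finset.univ.inf' Finset.univ_nonempty E), gibbsAt E (β n) s)
      Filter.atTop (nhds 1) := by
  set m := Finset.univ.inf' Finset.univ_nonempty E with hm
  have hle : ∀ s, m ≤ E s := fun s => Finset.inf'_le _ (Finset.mem_univ s)
  obtain ⟨t, -, ht⟩ := Finset.exists_mem_eq_inf' Finset.univ_nonempty E
  have hzero : ∀ s, E s ≠ m →
      Filter.Tendsto (fun n => gibbsAt E (β n) s) Filter.atTop (nhds 0) := by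
    intro s hs
    have hpos : 0 < E s - m := sub_pos.2 (lt_of_le_of_ne (hle s) (Ne.symm hs))
    have hlim : Filter.Tendsto (fun n => Real.exp (-(β n * (E s - m)))) Filter.atTop (nhds 0) :=
      Real.tendsto_exp_neg_atTop_nhds_zero.comp (hβ.atTop_mul_const hpos)
    refine squeeze_zero (fun n => (gibbsAt_pos E _ s).le) (fun n => ?_) hlim
    unfold gibbsAt
    rw [div_le_iff₀ (partition_pos E _)]
    have hZ : Real.exp (-β n * E t) ≤ ∑ s', Real.exp (-β n * E s') :=
      Finset.single_le_sum (f := fun s' => Real.exp (-β n * E s'))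
        (fun i _ => (Real.exp_pos _).le) (Finset.mem_univ t)
    calc Real.exp (-β n * E s)
        = Real.exp (-(β n * (E s - m))) * Real.exp (-β n * E t) := by
          rw [← Real.exp_add, ← ht]; congr 1; ring
      _ ≤ _ := by gcongr
  have hcompl : Filter.Tendsto (fun n => ∑ s ∈ Finset.univ.filter (fun s => ¬ E s = m),
      gibbsAt E (β n) s) Filter.atTop (nhds 0) := by
    have := tendsto_finsetSum (Finset.univ.filter (fun s => ¬ E s = m))
      (fun s hs => hzero s (Finset.mem_filter.1 hs).2)
    simpa using this
  have := hcompl.const_sub 1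
  rw [sub_zero] at this
  refine this.congr fun n => ?_
  rw [← gibbsAt_sum E (β n), ← Finset.sum_filter_add_sum_filter_not Finset.univ
    (fun s => E s = m) (fun s => gibbsAt E (β n) s)]
  ring

/-! ### Inhomogeneous chains -/

/-- The measure obtained from `ν` at time `n` after `j` steps of the inhomogeneous chain, where
`P n` is the kernel of the step from time `n` to time `n + 1`. -/
def evolve (P : ℕ → X → X → ℝ) (n : ℕ) (ν : X → ℝ) : ℕ → X → ℝ
  | 0 => ν
  | j + 1 => fun s' => ∑ s, evolve P n ν j s * P (n + j) s s'

theorem evolve_linear (P : ℕ → X → X → ℝ) (n : ℕ) (a : ℝ) (ν ρ : X → ℝ) (j : ℕ) (s : X) :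
    evolve P n (fun s => a * ν s + ρ s) j s = a * evolve P n ν j s + evolve P n ρ j s := by
  induction j generalizing s with
  | zero => rfl
  | succ j ih =>
    simp only [evolve, ih, Finset.mul_sum, ← Finset.sum_add_distrib]
    exact Finset.sum_congr rfl fun _ _ => by ring

theorem evolve_nonneg {P : ℕ → X → X → ℝ} (hP : ∀ n s s', 0 ≤ P n s s') (n : ℕ) {ν : X → ℝ}
    (hν : ∀ s, 0 ≤ ν s) (j : ℕ) (s : X) : 0 ≤ evolve P n ν j s := by
  induction j generalizing s with
  | zero => exact hν s
  | succ j ih => exact Finset.sum_nonneg fun t _ => mul_nonneg (ih t) (hP _ _ _)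

theorem evolve_sum {P : ℕ → X → X → ℝ} (hP : ∀ n s, ∑ s', P n s s' = 1) (n : ℕ) (ν : X → ℝ)
    (j : ℕ) : ∑ s, evolve P n ν j s = ∑ s, ν s := by
  induction j with
  | zero => rfl
  | succ j ih =>
    simp only [evolve]
    rw [Finset.sum_comm, ← ih]
    exact Finset.sum_congr rfl fun s _ => by rw [← Finset.mul_sum, hP, mul_one]

/-- A Gibbs law started at time `n` stays comparable to the current Gibbs law, because each kernel
preserves the Gibbs law of its own temperature. -/
theorem evolve_gibbs [Nonempty X] {E : X → ℝ} {K : ℝ} (hK : ∀ s, |E s| ≤ K) {β : ℕ → ℝ}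
    (hβ : Monotone β) {P : ℕ → X → X → ℝ} (hP : ∀ n s s', 0 ≤ P n s s')
    (hinv : ∀ n s', ∑ s, gibbsAt E (β (n + 1)) s * P n s s' = gibbsAt E (β (n + 1)) s')
    (n j : ℕ) (s : X) :
    Real.exp (-(2 * K * (β (n + j) - β n))) * gibbsAt E (β (n + j)) s
      ≤ evolve P n (gibbsAt E (β n)) j s := by
  induction j generalizing s with
  | zero => simp [evolve]
  | succ j ih =>
    simp only [evolve]
    rw [← add_assoc, ← hinv (n + j) s, Finset.mul_sum]
    refine Finset.sum_le_sum fun t _ => ?_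
    rw [← mul_assoc]
    refine mul_le_mul_of_nonneg_right (le_trans ?_ (ih t)) (hP _ _ _)
    have h := gibbs_change E K hK (hβ (Nat.le_succ (n + j))) t
    have hsplit : Real.exp (-(2 * K * (β (n + j + 1) - β n)))
        = Real.exp (-(2 * K * (β (n + j) - β n)))
          * Real.exp (-(2 * K * (β (n + j + 1) - β (n + j)))) := by
      rw [← Real.exp_add]; congr 1; ring
    rw [hsplit, mul_assoc]
    exact mul_le_mul_of_nonneg_left h (Real.exp_pos _).le

/-- Convergence of annealing on a finite set, for kernels preserving the Gibbs laws and satisfying a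
Doeblin condition of order `1 / √n` over blocks of `N` steps. -/
theorem annealing_abstract [Nonempty X] {E : X → ℝ} {K c κ : ℝ} {N : ℕ} (hK : ∀ s, |E s| ≤ K)
    (hN : 0 < N) (hc : 0 < c) (hκ : 0 < κ) (hκ1 : κ ≤ 1) {P : ℕ → X → X → ℝ}
    (hP : ∀ n s s', 0 ≤ P n s s') (hrow : ∀ n s, ∑ s', P n s s' = 1)
    (hinv : ∀ n s', ∑ s, gibbsAt E (invTemp c (n + 1)) s * P n s s'
      = gibbsAt E (invTemp c (n + 1)) s')
    (hminor : ∀ (n : ℕ) (ρ : X → ℝ), (∀ s, 0 ≤ ρ s) → ∀ s,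
      κ / √((n : ℝ) + N + 1) * ∑ r, ρ r ≤ evolve P n ρ N s)
    {μ : ℕ → X → ℝ} (hμ0 : ∀ s, 0 ≤ μ 0 s) (hμ1 : ∑ s, μ 0 s = 1)
    (hμ : ∀ n, μ (n + 1) = fun s' => ∑ s, μ n s * P n s s') :
    Filter.Tendsto (fun n => ∑ s ∈ Finset.univ.filter
      (fun s => E s = Finset.univ.inf' Finset.univ_nonempty E), μ n s) Filter.atTop (nhds 1) := by
  have hK0 : 0 ≤ K := (abs_nonneg _).trans (hK (Classical.arbitrary X))
  have hN1 : (1 : ℝ) ≤ N := by exact_mod_cast hN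
  have hev : ∀ n j, μ (n + j) = evolve P n (μ n) j := by
    intro n j
    induction j with
    | zero => rfl
    | succ j ih => rw [← add_assoc, hμ, ih]; rfl
  have hnn : ∀ n s, 0 ≤ μ n s := fun n s => by
    rw [← Nat.zero_add n, hev 0 n]; exact evolve_nonneg hP _ hμ0 _ _
  have hmass : ∀ n, ∑ s, μ n s = 1 := fun n => by
    rw [← Nat.zero_add n, hev 0 n, evolve_sum hrow, hμ1]
  have hmono := invTemp_mono hc
  set C : ℝ := 2 * K * (N / c) with hC
  have hC0 : 0 ≤ C := by positivity
  -- cost of the temperature change within a block starting at time `k * N`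
  have hdrift : ∀ k r : ℕ, r ≤ N →
      Real.exp (-(C / ((k : ℝ) + 1)))
        ≤ Real.exp (-(2 * K * (invTemp c (k * N + r) - invTemp c (k * N)))) := by
    intro k r hr
    rw [Real.exp_le_exp, neg_le_neg_iff]
    have h1 := invTemp_sub_le hc (k * N) N
    have h2 : invTemp c (k * N + r) ≤ invTemp c (k * N + N) := hmono (by omega)
    have h3 : (N : ℝ) / c / (((k * N : ℕ) : ℝ) + 1) ≤ N / c / ((k : ℝ) + 1) := by
      refine div_le_div_of_nonneg_left (by positivity) (by positivity) ?_
      push_cast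
      nlinarith [(Nat.cast_nonneg k : (0 : ℝ) ≤ k)]
    rw [hC, mul_div_assoc]
    exact mul_le_mul_of_nonneg_left (by linarith) (by positivity)
  set κ' : ℝ := κ / √(2 * N) with hκ'
  have hsN : 1 ≤ √(2 * (N : ℝ)) := by rw [Real.one_le_sqrt]; linarith
  have hκ'0 : 0 < κ' := div_pos hκ (by linarith)
  have hκ'1 : κ' ≤ 1 := by rw [hκ', div_le_one (by linarith)]; linarith
  have hgk : ∀ k : ℕ, κ' / √((k : ℝ) + 1) ≤ κ / √(((k * N : ℕ) : ℝ) + N + 1) := by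
    intro k
    rw [hκ', div_div, ← Real.sqrt_mul (by positivity)]
    refine div_le_div_of_nonneg_left hκ.le (Real.sqrt_pos.2 (by positivity)) (Real.sqrt_le_sqrt ?_)
    push_cast
    nlinarith [(Nat.cast_nonneg k : (0 : ℝ) ≤ k)]
  -- explicit constants `a k` with `a k • π ≤ μ` at time `k * N`
  let a : ℕ → ℝ := fun k => Nat.rec 0 (fun k b =>
    Real.exp (-(C / ((k : ℝ) + 1))) * b + κ' / √((k : ℝ) + 1) * (1 - b)) k
  have ha : ∀ k, a (k + 1)
      = Real.exp (-(C / ((k : ℝ) + 1))) * a k + κ' / √((k : ℝ) + 1) * (1 - a k) := fun k => rfl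
  have hgood1 : ∀ (b : ℝ) (n : ℕ), (∀ s, b * gibbsAt E (invTemp c n) s ≤ μ n s) → b ≤ 1 := by
    intro b n h
    have := Finset.sum_le_sum fun s (_ : s ∈ Finset.univ) => h s
    rwa [← Finset.mul_sum, gibbsAt_sum, mul_one, hmass] at this
  have hstep : ∀ (k r : ℕ) (b : ℝ), r ≤ N → 0 ≤ b →
      (∀ s, b * gibbsAt E (invTemp c (k * N)) s ≤ μ (k * N) s) → ∀ s,
      Real.exp (-(C / ((k : ℝ) + 1))) * b * gibbsAt E (invTemp c (k * N + r)) s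
        + evolve P (k * N) (fun s => μ (k * N) s - b * gibbsAt E (invTemp c (k * N)) s) r s
        ≤ μ (k * N + r) s := by
    intro k r b hr hb h s
    have hlin := evolve_linear P (k * N) b (gibbsAt E (invTemp c (k * N)))
      (fun s => μ (k * N) s - b * gibbsAt E (invTemp c (k * N)) s) r s
    have heq : (fun s => b * gibbsAt E (invTemp c (k * N)) s
        + (μ (k * N) s - b * gibbsAt E (invTemp c (k * N)) s)) = μ (k * N) := by
      funext s; ring
    rw [heq, ← hev] at hlin
    rw [hlin]
    refine add_le_add_left ?_ _
    rw [mul_comm _ b, mul_assoc]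
    refine mul_le_mul_of_nonneg_left ?_ hb
    refine le_trans ?_ (evolve_gibbs hK hmono hP hinv (k * N) r s)
    exact mul_le_mul_of_nonneg_right (hdrift k r hr) (gibbsAt_pos _ _ _).le
  have hgood : ∀ k, 0 ≤ a k ∧ ∀ s, a k * gibbsAt E (invTemp c (k * N)) s ≤ μ (k * N) s := by
    intro k
    induction k with
    | zero => exact ⟨le_rfl, fun s => by simpa [a] using hnn 0 s⟩
    | succ k ih =>
      obtain ⟨ih0, ih⟩ := ih
      have ih1 := hgood1 _ _ ih
      have hg0 : 0 ≤ κ' / √((k : ℝ) + 1) := by positivity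
      have hprod : 0 ≤ κ' / √((k : ℝ) + 1) * (1 - a k) := mul_nonneg hg0 (by linarith)
      refine ⟨by rw [ha]; positivity, fun s => ?_⟩
      have h1 := hstep k N (a k) le_rfl ih0 ih s
      have h2 := hminor (k * N) (fun s => μ (k * N) s - a k * gibbsAt E (invTemp c (k * N)) s)
        (fun s => sub_nonneg.2 (ih s)) s
      rw [Finset.sum_sub_distrib, ← Finset.mul_sum, gibbsAt_sum, hmass, mul_one] at h2
      have h3 : κ' / √((k : ℝ) + 1) * (1 - a k)
          ≤ κ / √(((k * N : ℕ) : ℝ) + N + 1) * (1 - a k) :=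
        mul_le_mul_of_nonneg_right (hgk k) (by linarith)
      have h4 : κ' / √((k : ℝ) + 1) * (1 - a k) * gibbsAt E (invTemp c (k * N + N)) s
          ≤ κ' / √((k : ℝ) + 1) * (1 - a k) :=
        mul_le_of_le_one_right hprod (gibbsAt_le_one _ _ _)
      rw [ha, Nat.succ_mul, add_mul]
      linarith
  have ha1 : ∀ k, a k ≤ 1 := fun k => hgood1 _ _ (hgood k).2
  have hx : Filter.Tendsto (fun k => 1 - a k) Filter.atTop (nhds 0) := by
    refine defect_tendsto_zero _ κ' C hκ'0 hκ'1 (fun k => ?_) (fun k => sub_nonneg.2 (ha1 k))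
    have h1 : 1 - C / ((k : ℝ) + 1) ≤ Real.exp (-(C / ((k : ℝ) + 1))) := by
      linarith [Real.add_one_le_exp (-(C / ((k : ℝ) + 1)))]
    have h2 : 0 ≤ C / ((k : ℝ) + 1) := by positivity
    rw [ha]
    nlinarith [mul_le_mul_of_nonneg_right h1 (hgood k).1, mul_le_of_le_one_right h2 (ha1 k)]
  have hatend : Filter.Tendsto a Filter.atTop (nhds 1) := by
    simpa using hx.const_sub 1
  have hexp : Filter.Tendsto (fun k : ℕ => Real.exp (-(C / ((k : ℝ) + 1)))) Filter.atTop
      (nhds 1) := by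
    have h : Filter.Tendsto (fun k : ℕ => C / ((k : ℝ) + 1)) Filter.atTop (nhds 0) := by
      simpa [div_eq_mul_inv] using (tendsto_one_div_add_atTop_nhds_zero_nat (𝕜 := ℝ)).const_mul C
    simpa [Function.comp_def] using (Real.continuous_exp.tendsto _).comp h.neg
  have hlow := (((hexp.mul hatend).comp (Nat.tendsto_div_const_atTop hN.ne')).mul
    (gibbs_concentrates E (invTemp_tendsto hc)))
  rw [mul_one, mul_one] at hlow
  refine tendsto_of_tendsto_of_tendsto_of_le_of_le hlow tendsto_const_nhds (fun n => ?_)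
    (fun n => ?_)
  · simp only [Function.comp]
    rw [Finset.mul_sum]
    refine Finset.sum_le_sum fun s _ => ?_
    have h := hstep (n / N) (n % N) _ (Nat.mod_lt _ hN).le (hgood (n / N)).1 (hgood (n / N)).2 s
    have h2 := evolve_nonneg hP (n / N * N) (fun s => sub_nonneg.2 ((hgood (n / N)).2 s)) (n % N) s
    rw [Nat.div_add_mod'] at h
    linarith
  · simp only
    rw [← hmass n]
    exact Finset.sum_le_sum_of_subset_of_nonneg (Finset.filter_subset _ _) fun s _ _ => hnn n s

end Abstract

/-! ### The heat-bath kernels -/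

section HeatBath

variable {U : Type*} [Fintype U] [DecidableEq U] {S : U → Type*}

/-- Changing only the state of `u` changes the global energy by the change of the local energy. -/
theorem globalEnergy_sub (φ1 : ∀ u, S u → ℝ) (φ2 : ∀ u v, S u → S v → ℝ)
    (hsym : ∀ u v (a : S u) (b : S v), φ2 u v a b = φ2 v u b a) (u : U) (s s' : ∀ v, S v)
    (h : ∀ v, v ≠ u → s' v = s v) :
    globalEnergy φ1 φ2 s' - globalEnergy φ1 φ2 s
      = localEnergy φ1 φ2 u s' - localEnergy φ1 φ2 u s := by
  set d : U → U → ℝ := fun w v => φ2 w v (s' w) (s' v) - φ2 w v (s w) (s v) with hd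
  have hdsym : ∀ w v, d w v = d v w := fun w v => by
    simp only [hd]; rw [hsym w v, hsym w v]
  have hd0 : ∀ w v, w ≠ u → v ≠ u → d w v = 0 := fun w v hw hv => by
    simp only [hd]; rw [h w hw, h v hv, sub_self]
  have h1 : ∑ w, φ1 w (s' w) - ∑ w, φ1 w (s w) = φ1 u (s' u) - φ1 u (s u) := by
    rw [← Finset.sum_sub_distrib]
    exact Finset.sum_eq_single u (fun w _ hw => by rw [h w hw, sub_self]) (by simp)
  have h2 : ∑ w, ∑ v ∈ Finset.univ.erase w, d w v = 2 * ∑ v ∈ Finset.univ.erase u, d u v := by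
    rw [← Finset.add_sum_erase _ _ (Finset.mem_univ u), two_mul]
    congr 1
    refine Finset.sum_congr rfl fun w hw => ?_
    have hwu := Finset.ne_of_mem_erase hw
    rw [hdsym u w]
    exact Finset.sum_eq_single u (fun v _ hv => hd0 w v hwu hv)
      (fun hu => (hu (by simp [hwu.symm])).elim)
  have h3 : ∑ w, ∑ v ∈ Finset.univ.erase w, φ2 w v (s' w) (s' v)
      - ∑ w, ∑ v ∈ Finset.univ.erase w, φ2 w v (s w) (s v)
      = 2 * (∑ v ∈ Finset.univ.erase u, φ2 u v (s' u) (s' v)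
        - ∑ v ∈ Finset.univ.erase u, φ2 u v (s u) (s v)) := by
    simpa only [hd, Finset.sum_sub_distrib] using h2
  unfold globalEnergy localEnergy
  linarith

variable [∀ u, Fintype (S u)] [∀ u, DecidableEq (S u)]

theorem heatBath_nonneg (φ1 : ∀ u, S u → ℝ) (φ2 : ∀ u v, S u → S v → ℝ) (T : ℝ) (u : U)
    (s s' : ∀ v, S v) : 0 ≤ heatBath φ1 φ2 T u s s' := by
  unfold heatBath
  split_ifs <;> positivity

theorem heatBath_sum [∀ u, Nonempty (S u)] (φ1 : ∀ u, S u → ℝ) (φ2 : ∀ u v, S u → S v → ℝ)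
    (T : ℝ) (u : U) (s : ∀ v, S v) : ∑ s', heatBath φ1 φ2 T u s s' = 1 := by
  unfold heatBath
  rw [← Finset.sum_filter, ← Finset.sum_div]
  have hpos : 0 < ∑ a : S u, Real.exp (-(localEnergy φ1 φ2 u (Function.update s u a)) / T) :=
    Finset.sum_pos (fun _ _ => Real.exp_pos _) Finset.univ_nonempty
  rw [div_eq_one_iff_eq hpos.ne']
  symm
  refine Finset.sum_bij (fun a _ => Function.update s u a) ?_ ?_ ?_ ?_
  · intro a _
    simp only [Finset.mem_filter, Finset.mem_univ, true_and]
    exact fun v hv => Function.update_of_ne hv _ _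
  · exact fun a _ b _ h => Function.update_injective s u h
  · intro s' hs'
    rw [Finset.mem_filter] at hs'
    refine ⟨s' u, Finset.mem_univ _, ?_⟩
    funext v
    by_cases hv : v = u
    · subst hv; simp
    · rw [Function.update_of_ne hv, hs'.2 v hv]
  · exact fun a _ => rfl

/-- Detailed balance of the heat-bath kernel. -/
theorem heatBath_reversible (φ1 : ∀ u, S u → ℝ) (φ2 : ∀ u v, S u → S v → ℝ)
    (hsym : ∀ u v (a : S u) (b : S v), φ2 u v a b = φ2 v u b a) (T : ℝ) (u : U)
    (s s' : ∀ v, S v) :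
    gibbsAt (globalEnergy φ1 φ2) T⁻¹ s * heatBath φ1 φ2 T u s s'
      = gibbsAt (globalEnergy φ1 φ2) T⁻¹ s' * heatBath φ1 φ2 T u s' s := by
  unfold heatBath
  by_cases h : ∀ v, v ≠ u → s' v = s v
  · have h' : ∀ v, v ≠ u → s v = s' v := fun v hv => (h v hv).symm
    rw [if_pos h, if_pos h']
    have hup : ∀ a : S u, Function.update s' u a = Function.update s u a := fun a => by
      funext v
      by_cases hv : v = u
      · subst hv; simp
      · rw [Function.update_of_ne hv, Function.update_of_ne hv, h v hv]
    have hE := globalEnergy_sub φ1 φ2 hsym u s s' h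
    simp only [hup]
    unfold gibbsAt
    rw [div_mul_div_comm, div_mul_div_comm, ← Real.exp_add, ← Real.exp_add]
    congr 2
    rw [div_eq_mul_inv, div_eq_mul_inv]
    linear_combination T⁻¹ * hE
  · rw [if_neg h, if_neg (fun h' => h fun v hv => (h' v hv).symm), mul_zero, mul_zero]

theorem randomScan_nonneg (φ1 : ∀ u, S u → ℝ) (φ2 : ∀ u v, S u → S v → ℝ) (T : ℝ)
    (s s' : ∀ v, S v) : 0 ≤ randomScan φ1 φ2 T s s' :=
  mul_nonneg (by positivity) (Finset.sum_nonneg fun u _ => heatBath_nonneg φ1 φ2 T u s s')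

/-- If every single-site move has probability at least `q`, then `|A|` steps can rewrite the
sites in `A` one by one, each at the price of a factor `q`. -/
theorem spread {P : ℕ → (∀ v, S v) → (∀ v, S v) → ℝ} (hP : ∀ n s s', 0 ≤ P n s s') {q : ℝ}
    (hq : 0 ≤ q) (n N : ℕ)
    (hlow : ∀ j, j < N → ∀ (u : U) s s', (∀ v, v ≠ u → s' v = s v) → q ≤ P (n + j) s s')
    {ρ : (∀ v, S v) → ℝ} (hρ : ∀ s, 0 ≤ ρ s) (A : Finset U) (hA : A.card ≤ N) (s' : ∀ v, S v) :
    q ^ A.card * ∑ r ∈ Finset.univ.filter (fun r : ∀ v, S v => ∀ v, v ∉ A → r v = s' v), ρ r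
      ≤ evolve P n ρ A.card s' := by
  induction A using Finset.induction_on generalizing s' with
  | empty =>
    have : Finset.univ.filter (fun r : ∀ v, S v => ∀ v, v ∉ (∅ : Finset U) → r v = s' v)
        = {s'} := by
      ext r; simp [funext_iff]
    rw [this, Finset.card_empty, pow_zero, one_mul, Finset.sum_singleton, evolve]
  | insert u A hu ih =>
    rw [Finset.card_insert_of_notMem hu] at hA ⊢
    set I := Finset.univ.filter (fun s : ∀ v, S v => ∀ v, v ≠ u → s v = s' v) with hI
    set B : (∀ v, S v) → Finset (∀ v, S v) := fun s =>
      Finset.univ.filter (fun r : ∀ v, S v => ∀ v, v ∉ A → r v = s v) with hB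
    -- `r` reaches `s'` through `s' [u := r u]`
    have hsub : Finset.univ.filter (fun r : ∀ v, S v => ∀ v, v ∉ insert u A → r v = s' v)
        ⊆ I.biUnion B := by
      intro r hr
      simp only [Finset.mem_filter, Finset.mem_univ, true_and] at hr
      simp only [hI, hB, Finset.mem_biUnion, Finset.mem_filter, Finset.mem_univ, true_and]
      refine ⟨Function.update s' u (r u), fun v hv => Function.update_of_ne hv _ _,
        fun v hv => ?_⟩
      by_cases hvu : v = u
      · subst hvu; simp
      · rw [Function.update_of_ne hvu]
        exact hr v (by simp [hvu, hv])
    -- an element of `B s` determines the state of `s` at `u`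
    have hdisj : (I : Set (∀ v, S v)).PairwiseDisjoint B := by
      intro s hs t ht hst
      refine Finset.disjoint_left.2 fun r hrs hrt => hst ?_
      simp only [hI, hB, Finset.coe_filter, Set.mem_ofPred_eq, Finset.mem_filter, Finset.mem_univ,
        true_and] at hs ht hrs hrt
      funext v
      by_cases hv : v = u
      · subst hv; rw [← hrs v hu, hrt v hu]
      · rw [hs v hv, ht v hv]
    have hsum : ∑ r ∈ Finset.univ.filter
        (fun r : ∀ v, S v => ∀ v, v ∉ insert u A → r v = s' v), ρ r
        ≤ ∑ s ∈ I, ∑ r ∈ B s, ρ r :=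
      (Finset.sum_le_sum_of_subset_of_nonneg hsub fun r _ _ => hρ r).trans
        (Finset.sum_biUnion hdisj).le
    calc _ ≤ q ^ (A.card + 1) * ∑ s ∈ I, ∑ r ∈ B s, ρ r := by gcongr
      _ = ∑ s ∈ I, (q ^ A.card * ∑ r ∈ B s, ρ r) * q := by
        rw [Finset.mul_sum]; exact Finset.sum_congr rfl fun s _ => by ring
      _ ≤ ∑ s ∈ I, evolve P n ρ A.card s * P (n + A.card) s s' := by
        refine Finset.sum_le_sum fun s hs => ?_
        rw [hI, Finset.mem_filter] at hs
        exact mul_le_mul (ih (by omega) s)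
          (hlow A.card (by omega) u s s' fun v hv => (hs.2 v hv).symm) hq
          (evolve_nonneg hP n hρ _ _)
      _ ≤ ∑ s, evolve P n ρ A.card s * P (n + A.card) s s' :=
        Finset.sum_le_sum_of_subset_of_nonneg (Finset.subset_univ _) fun s _ _ =>
          mul_nonneg (evolve_nonneg hP n hρ _ _) (hP _ _ _)
      _ = _ := rfl

variable [Nonempty U] [∀ u, Nonempty (S u)]

theorem randomScan_sum (φ1 : ∀ u, S u → ℝ) (φ2 : ∀ u v, S u → S v → ℝ) (T : ℝ)
    (s : ∀ v, S v) : ∑ s', randomScan φ1 φ2 T s s' = 1 := by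
  unfold randomScan
  rw [← Finset.mul_sum, Finset.sum_comm]
  simp [heatBath_sum]

theorem gibbs_invariant (φ1 : ∀ u, S u → ℝ) (φ2 : ∀ u v, S u → S v → ℝ)
    (hsym : ∀ u v (a : S u) (b : S v), φ2 u v a b = φ2 v u b a) (T : ℝ) (s' : ∀ v, S v) :
    ∑ s, gibbsAt (globalEnergy φ1 φ2) T⁻¹ s * randomScan φ1 φ2 T s s'
      = gibbsAt (globalEnergy φ1 φ2) T⁻¹ s' := by
  have hrev : ∀ s, gibbsAt (globalEnergy φ1 φ2) T⁻¹ s * randomScan φ1 φ2 T s s'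
      = gibbsAt (globalEnergy φ1 φ2) T⁻¹ s' * randomScan φ1 φ2 T s' s := by
    intro s
    unfold randomScan
    rw [mul_left_comm, mul_left_comm (gibbsAt _ _ s')]
    congr 1
    rw [Finset.mul_sum, Finset.mul_sum]
    exact Finset.sum_congr rfl fun u _ => heatBath_reversible φ1 φ2 hsym T u s s'
  rw [Finset.sum_congr rfl fun s _ => hrev s, ← Finset.mul_sum, randomScan_sum, mul_one]

theorem randomScan_lower {φ1 : ∀ u, S u → ℝ} {φ2 : ∀ u v, S u → S v → ℝ} {K M : ℝ}
    (hK : ∀ u s, |localEnergy φ1 φ2 u s| ≤ K) (hM : ∀ u, (Fintype.card (S u) : ℝ) ≤ M)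
    {T : ℝ} (hT : 0 ≤ T⁻¹) (u : U) (s s' : ∀ v, S v) (h : ∀ v, v ≠ u → s' v = s v) :
    Real.exp (-(2 * K * T⁻¹)) / (Fintype.card U * M) ≤ randomScan φ1 φ2 T s s' := by
  have hc : (0 : ℝ) < Fintype.card (S u) := by exact_mod_cast Fintype.card_pos
  have hM0 : 0 < M := hc.trans_le (hM u)
  have hU : (0 : ℝ) < Fintype.card U := by exact_mod_cast Fintype.card_pos
  have hone : Real.exp (-(2 * K * T⁻¹)) / M ≤ heatBath φ1 φ2 T u s s' := by
    unfold heatBath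
    rw [if_pos h, div_le_div_iff₀ hM0
      (Finset.sum_pos (fun _ _ => Real.exp_pos _) Finset.univ_nonempty)]
    have hZ : ∑ a : S u, Real.exp (-(localEnergy φ1 φ2 u (Function.update s u a)) / T)
        ≤ M * Real.exp (K * T⁻¹) := by
      refine (Finset.sum_le_card_nsmul _ _ (Real.exp (K * T⁻¹)) fun a _ => ?_).trans ?_
      · rw [Real.exp_le_exp, div_eq_mul_inv]
        exact mul_le_mul_of_nonneg_right
          (by linarith [(abs_le.1 (hK u (Function.update s u a))).1]) hT
      · rw [nsmul_eq_mul, Finset.card_univ]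
        exact mul_le_mul_of_nonneg_right (hM u) (Real.exp_pos _).le
    have hn : Real.exp (-(K * T⁻¹)) ≤ Real.exp (-(localEnergy φ1 φ2 u s') / T) := by
      rw [Real.exp_le_exp, div_eq_mul_inv, ← neg_mul]
      exact mul_le_mul_of_nonneg_right (by linarith [(abs_le.1 (hK u s')).2]) hT
    calc _ ≤ Real.exp (-(2 * K * T⁻¹)) * (M * Real.exp (K * T⁻¹)) := by gcongr
      _ = Real.exp (-(K * T⁻¹)) * M := by
        rw [mul_comm M, ← mul_assoc, ← Real.exp_add]; congr 2; ring
      _ ≤ _ := by gcongr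
  unfold randomScan
  calc Real.exp (-(2 * K * T⁻¹)) / (Fintype.card U * M)
      = 1 / (Fintype.card U : ℝ) * (Real.exp (-(2 * K * T⁻¹)) / M) := by
        field_simp
    _ ≤ _ := mul_le_mul_of_nonneg_left (hone.trans (Finset.single_le_sum
        (f := fun u => heatBath φ1 φ2 T u s s')
        (fun i _ => heatBath_nonneg φ1 φ2 T i s s') (Finset.mem_univ u))) (by positivity)

theorem temp_inv (c : ℝ) (n : ℕ) :
    (c / Real.log ((n : ℝ) + 1 + 1))⁻¹ = invTemp c (n + 1) := by
  unfold invTemp; rw [inv_div]; push_cast; rfl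

/-- The Doeblin condition for a block of `|U|` steps. The bound `4 K |U| ≤ c` makes
`exp (-2 K |U| β)` at least the inverse square root of the time. -/
theorem minorization {φ1 : ∀ u, S u → ℝ} {φ2 : ∀ u v, S u → S v → ℝ} {K M c : ℝ} (hK0 : 0 < K)
    (hK : ∀ u s, |localEnergy φ1 φ2 u s| ≤ K) (hM : ∀ u, (Fintype.card (S u) : ℝ) ≤ M)
    (hc : 4 * K * Fintype.card U ≤ c) (n : ℕ) {ρ : (∀ v, S v) → ℝ} (hρ : ∀ s, 0 ≤ ρ s)
    (s : ∀ v, S v) :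
    (1 / (Fintype.card U * M)) ^ Fintype.card U / √((n : ℝ) + Fintype.card U + 1) * ∑ r, ρ r
      ≤ evolve (fun n => randomScan φ1 φ2 (c / Real.log ((n : ℝ) + 1 + 1))) n ρ
        (Fintype.card U) s := by
  set N := Fintype.card U with hN
  have hN0 : (0 : ℝ) < N := by exact_mod_cast Fintype.card_pos
  have hc0 : 0 < c := lt_of_lt_of_le (by positivity) hc
  have hM0 : 0 < M := lt_of_lt_of_le (by exact_mod_cast Fintype.card_pos)
    (hM (Classical.arbitrary U))
  have hmono := invTemp_mono hc0
  have hb0 : ∀ m, 0 ≤ invTemp c m := fun m => by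
    have := hmono (Nat.zero_le m)
    simpa [invTemp] using this
  set q : ℝ := Real.exp (-(2 * K * invTemp c (n + N))) / (N * M) with hq
  have hq0 : 0 ≤ q := by positivity
  have hlow : ∀ j, j < N → ∀ (u : U) (s s' : ∀ v, S v), (∀ v, v ≠ u → s' v = s v) →
      q ≤ randomScan φ1 φ2 (c / Real.log (((n + j : ℕ) : ℝ) + 1 + 1)) s s' := by
    intro j hj u s s' h
    refine le_trans ?_ (randomScan_lower hK hM (by rw [temp_inv]; exact hb0 _) u s s' h)
    rw [temp_inv, hq]
    have : invTemp c (n + j + 1) ≤ invTemp c (n + N) := hmono (by omega)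
    gcongr
  have hs := spread (P := fun n => randomScan φ1 φ2 (c / Real.log ((n : ℝ) + 1 + 1)))
    (fun n s s' => randomScan_nonneg _ _ _ _ _) hq0 n N hlow hρ Finset.univ
    (by rw [Finset.card_univ]) s
  simp only [Finset.mem_univ, not_true_eq_false, false_imp_iff, implies_true,
    Finset.filter_true, Finset.card_univ] at hs
  refine le_trans (mul_le_mul_of_nonneg_right ?_ (Finset.sum_nonneg fun r _ => hρ r)) hs
  have hpos : (0 : ℝ) < (n : ℝ) + N + 1 := by positivity
  have hsq : (√((n : ℝ) + N + 1))⁻¹ = Real.exp (-(Real.log ((n : ℝ) + N + 1) / 2)) := by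
    rw [Real.exp_neg, ← Real.log_sqrt hpos.le, Real.exp_log (Real.sqrt_pos.2 hpos)]
  have hlog : 0 ≤ Real.log ((n : ℝ) + N + 1) :=
    Real.log_nonneg (by linarith [(Nat.cast_nonneg n : (0 : ℝ) ≤ n)])
  rw [hq, div_pow, div_pow, one_pow, ← Real.exp_nat_mul, div_right_comm, one_div, hsq]
  refine div_le_div_of_nonneg_right (Real.exp_le_exp.2 ?_) (by positivity)
  unfold invTemp
  push_cast
  have h1 : 2 * K * N * (Real.log ((n : ℝ) + N + 1) / c) ≤ Real.log ((n : ℝ) + N + 1) / 2 := by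
    rw [mul_div_assoc', div_le_div_iff₀ hc0 two_pos]
    nlinarith
  linarith

end HeatBath

/-- Annealed variant: there is a constant `c₀ > 0` (depending on the energy and on `|U|`)
such that for every `c ≥ c₀`, with the cooling schedule `T_n = c/log(n+1)` for `n ≥ 1` and
the random-scan kernel `P⁽ⁿ⁾` taken at temperature `T_n`, the laws
`μ_n = μ·P⁽¹⁾·P⁽²⁾⋯P⁽ⁿ⁾` (for an arbitrary initial probability vector `μ`) concentrate on
the global minimizers of the energy: `Σ_{s : E(s) = min E} μ_n(s) → 1` as `n → ∞`. -/
theorem annealed_gibbs_sampler_converges_to_minimizers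
    {U : Type*} [Fintype U] [DecidableEq U] [Nonempty U]
    {S : U → Type*} [∀ u, Fintype (S u)] [∀ u, Nonempty (S u)] [∀ u, DecidableEq (S u)]
    (φ1 : ∀ u, S u → ℝ) (φ2 : ∀ u v, S u → S v → ℝ)
    (hsym : ∀ u v (a : S u) (b : S v), φ2 u v a b = φ2 v u b a) :
    ∃ c₀ : ℝ, 0 < c₀ ∧ ∀ c : ℝ, c₀ ≤ c →
      ∀ μ : (∀ v, S v) → ℝ, (∀ s, 0 ≤ μ s) → (∑ s, μ s = 1) →
        ∀ μseq : ℕ → (∀ v, S v) → ℝ,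
          μseq 0 = μ →
          (∀ n : ℕ, μseq (n + 1) = fun s' =>
              ∑ s : ∀ v, S v,
                μseq n s * randomScan φ1 φ2 (c / Real.log ((n : ℝ) + 1 + 1)) s s') →
          Filter.Tendsto
            (fun n => ∑ s ∈ Finset.univ.filter
                (fun s => globalEnergy φ1 φ2 s
                    = Finset.univ.inf' Finset.univ_nonempty (globalEnergy φ1 φ2)),
              μseq n s)
            Filter.atTop (nhds 1) := by
  obtain ⟨K₁, hK₁⟩ := Finite.exists_le
    (fun p : U × (∀ v, S v) => |localEnergy φ1 φ2 p.1 p.2|)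
  obtain ⟨K₂, hK₂⟩ := Finite.exists_le (fun s => |globalEnergy φ1 φ2 s|)
  obtain ⟨M, hM⟩ := Finite.exists_le (fun u => (Fintype.card (S u) : ℝ))
  have hU : (1 : ℝ) ≤ Fintype.card U := by exact_mod_cast (Fintype.card_pos : 0 < Fintype.card U)
  have hM1 : 1 ≤ M := le_trans
    (Nat.one_le_cast.2 Fintype.card_pos) (hM (Classical.arbitrary U))
  set K := max 1 (max K₁ K₂) with hKdef
  have hK1 : 1 ≤ K := le_max_left _ _
  refine ⟨4 * K * Fintype.card U, by positivity, fun c hc μ hμ0 hμ1 μseq h0 hstep => ?_⟩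
  have hc0 : 0 < c := lt_of_lt_of_le (by positivity) hc
  subst h0
  have hNM : 1 / (Fintype.card U * M) ≤ 1 := by
    rw [div_le_one (by positivity)]; nlinarith
  exact annealing_abstract (N := Fintype.card U) (K := K)
    (κ := (1 / (Fintype.card U * M)) ^ Fintype.card U)
    (fun s => (hK₂ s).trans ((le_max_right _ _).trans (le_max_right _ _)))
    Fintype.card_pos hc0 (by positivity) (pow_le_one₀ (by positivity) hNM)
    (P := fun n => randomScan φ1 φ2 (c / Real.log ((n : ℝ) + 1 + 1)))
    (fun n s s' => randomScan_nonneg _ _ _ _ _) (fun n s => randomScan_sum _ _ _ _)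
    (fun n s' => by
      simpa only [temp_inv] using
        gibbs_invariant φ1 φ2 hsym (c / Real.log ((n : ℝ) + 1 + 1)) s')
    (fun n ρ hρ s => minorization (by linarith)
      (fun u s => (hK₁ (u, s)).trans ((le_max_left _ _).trans (le_max_right _ _))) hM hc n hρ s)
    hμ0 hμ1 hstep
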